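/- Let T be an exponentially growing rank-one transformation with a bounded number of cuts, and let I be the unit interval. Then T is boundedly rationally ergodic on I: there is a constant c such that for every n ≥ 1, the essential supremum of (1/a_n(I)) S_n(1_I) is at most c, where S_n(1_I) = ∑_{k=0}^{n−1} 1_I ∘ T^k. -/

import Mathlib

open MeasureTheory Filter Set Pointwise

/-- A rank-one cutting-and-stacking transformation of a subset `X ⊆ ℝ` (with Lebesgue
measure), given by columns `C n` consisting of `h n` levels (open intervals) of width `w n`,
with `pos n j` the left endpoint of the level of height `j` in column `C n`; column `C (n+1)`
is obtained from `C n` by cutting into `r n ≥ 2` subcolumns of equal width, adding `s n k`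
spacers above the `k`-th subcolumn, and stacking. -/
structure RankOne where
  X : Set ℝ
  T : ℝ ≃ᵐ ℝ
  r : ℕ → ℕ
  s : ℕ → ℕ → ℕ
  h : ℕ → ℕ
  w : ℕ → ℝ
  pos : ℕ → ℕ → ℝ
  hr : ∀ n, 2 ≤ r n
  h0 : h 0 = 1
  w0 : w 0 = 1
  pos0 : pos 0 0 = 0
  hrec : ∀ n, h (n + 1) = ∑ k ∈ Finset.range (r n), (h n + s n k)
  wrec : ∀ n, w (n + 1) = w n / (r n : ℝ)
  hX : X = ⋃ n, ⋃ j < h n, Set.Ioo (pos n j) (pos n j + w n)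
  disj : ∀ n, ∀ j < h n, ∀ j' < h n, j ≠ j' →
    Disjoint (Set.Ioo (pos n j) (pos n j + w n)) (Set.Ioo (pos n j') (pos n j' + w n))
  stack : ∀ n, ∀ j < h n, ∀ k < r n,
    pos (n + 1) ((∑ i ∈ Finset.range k, (h n + s n i)) + j) = pos n j + (k : ℝ) * w (n + 1)
  Tmap : ∀ n j, j + 1 < h n → ∀ x ∈ Set.Ioo (pos n j) (pos n j + w n),
    T x = x + (pos n (j + 1) - pos n j)
  Tbij : Set.BijOn (⇑T) X X
  Tpres : MeasurePreserving (⇑T) (volume.restrict X) (volume.restrict X)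

namespace RankOne

/-- The level of height `j` in column `C n`. -/
def lvl (S : RankOne) (n j : ℕ) : Set ℝ := Set.Ioo (S.pos n j) (S.pos n j + S.w n)

/-- The measure on the space: Lebesgue measure restricted to `X`. -/
noncomputable def μ (S : RankOne) : Measure ℝ := volume.restrict S.X

/-- The intrinsic weight sequence `u n F = μ(F ∩ TⁿF) / μ(F)²`. -/
noncomputable def u (S : RankOne) (F : Set ℝ) (n : ℕ) : ℝ :=
  (S.μ (F ∩ (⇑S.T)^[n] '' F)).toReal / (S.μ F).toReal ^ 2

/-- `a n F = ∑_{k<n} u k F`. -/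
noncomputable def a (S : RankOne) (F : Set ℝ) (n : ℕ) : ℝ :=
  ∑ k ∈ Finset.range n, S.u F k

/-- `T` is normal if spacers are added above the rightmost subcolumn infinitely often. -/
def Normal (S : RankOne) : Prop := ∀ m, ∃ n, m ≤ n ∧ 0 < S.s n (S.r n - 1)

/-- `T` grows exponentially: `2 s_{n, r_n - 1} ≥ h_{n+1}` for every `n`. -/
def ExpGrowing (S : RankOne) : Prop := ∀ n, S.h (n + 1) ≤ 2 * S.s n (S.r n - 1)

/-- `T` has a bounded number of cuts: `sup r_n < ∞`. -/
def BoundedCuts (S : RankOne) : Prop := ∃ c, ∀ n, S.r n ≤ c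

/-- `H n = {0} ∪ {∑_{k≤i} (h n + s n k) : 0 ≤ i < r n - 1}`. -/
def Hset (S : RankOne) (n : ℕ) : Finset ℕ :=
  insert 0 ((Finset.range (S.r n - 1)).image fun i => ∑ k ∈ Finset.range (i + 1), (S.h n + S.s n k))

/-- The set of heights in column `C N` of the descendants of the level of height `p`
in column `C j`: `D(J, N) = p + H j ⊕ H (j+1) ⊕ ⋯ ⊕ H (N-1)`. -/
def desc (S : RankOne) (j p : ℕ) : ℕ → Finset ℕ
  | 0 => {p}
  | N + 1 => if N < j then {p} else desc S j p N + S.Hset N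

/-- `M m`: the maximal height of a descendant of the unit interval `I` in column `C m`. -/
def M (S : RankOne) (m : ℕ) : ℕ := (S.desc 0 0 m).sup id

/-- The ergodic sum `S_n(1_F)(x) = ∑_{k<n} 1_F(T^k x)`. -/
noncomputable def birkhoff (S : RankOne) (F : Set ℝ) (n : ℕ) (x : ℝ) : ℝ :=
  ∑ k ∈ Finset.range n, Set.indicator F (fun _ => (1 : ℝ)) ((⇑S.T)^[k] x)

/-- `T` is rationally weakly mixing on `F`. -/
def RWMOn (S : RankOne) (F : Set ℝ) : Prop :=
  MeasurableSet F ∧ 0 < S.μ F ∧ S.μ F ≠ ⊤ ∧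
  ∀ A B : Set ℝ, MeasurableSet A → A ⊆ F → MeasurableSet B → B ⊆ F →
    Tendsto (fun n => (S.a F n)⁻¹ *
      ∑ k ∈ Finset.range n,
        |(S.μ (A ∩ (⇑S.T)^[k] '' B)).toReal - (S.μ A).toReal * (S.μ B).toReal * S.u F k|)
      atTop (nhds 0)

/-- `T` is rationally weakly mixing. -/
def RWM (S : RankOne) : Prop := ∃ F, S.RWMOn F

/-- `T` is rationally ergodic: some set `F` of positive finite measure satisfies a
Renyi inequality. -/
def RatErgodic (S : RankOne) : Prop :=
  ∃ (F : Set ℝ) (c : ℝ), MeasurableSet F ∧ 0 < S.μ F ∧ S.μ F ≠ ⊤ ∧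
    ∀ n, ∫ x in F, (S.birkhoff F n x) ^ 2 ∂S.μ ≤ c * (∫ x in F, S.birkhoff F n x ∂S.μ) ^ 2

/-- `T` is spectrally weakly mixing: every bounded measurable eigenfunction is a.e. constant. -/
def SpecWM (S : RankOne) : Prop :=
  ∀ (f : ℝ → ℂ) (z : ℂ), Measurable f → (∃ C, ∀ᵐ x ∂S.μ, ‖f x‖ ≤ C) →
    (∀ᵐ x ∂S.μ, f (S.T x) = z * f x) → ∃ c : ℂ, ∀ᵐ x ∂S.μ, f x = c

/-- `T` is zero-type: `μ(A ∩ TⁿA) → 0` for all `A` of finite measure. -/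
def ZeroType (S : RankOne) : Prop :=
  ∀ A : Set ℝ, MeasurableSet A → S.μ A ≠ ⊤ →
    Tendsto (fun n => S.μ (A ∩ (⇑S.T)^[n] '' A)) atTop (nhds 0)

/-- The `i`-th nonzero element of `H n` (for `i < r n - 1`): `e n i = ∑_{k ≤ i} (h n + s n k)`. -/
def e (S : RankOne) (n i : ℕ) : ℕ := ∑ k ∈ Finset.range (i + 1), (S.h n + S.s n k)

/-- `T` is steep: listing the nonzero elements of `H 0`, then `H 1`, etc., as `t 1, t 2, …`,
each successive element is at least `4` times the previous one. -/
def Steep (S : RankOne) : Prop :=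
  (∀ n i, i + 2 < S.r n → 4 * S.e n i ≤ S.e n (i + 1)) ∧
  (∀ n, 4 * S.e n (S.r n - 2) ≤ S.e (n + 1) 0)

/-- `T` is almost steep. -/
def AlmostSteep (S : RankOne) : Prop :=
  ∀ n, 3 ≤ S.r n ∧ S.s n 0 = 0 ∧ S.s n 1 = 1 ∧
    ∀ i, 2 ≤ i → i ≤ S.r n - 1 →
      4 * (∑ k ∈ Finset.range i, (S.h n + S.s n k)) ≤ ∑ k ∈ Finset.range (i + 1), (S.h n + S.s n k)

/-- `A` is a finite union of levels of `T`. -/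
def FinUnionLevels (S : RankOne) (A : Set ℝ) : Prop :=
  ∃ q : Finset (ℕ × ℕ), (∀ v ∈ q, v.2 < S.h v.1) ∧ A = ⋃ v ∈ q, S.lvl v.1 v.2

end RankOne


namespace RankOne

/-- Heights in column `C N` of the descendants of the unit interval. -/
def E (S : RankOne) : ℕ → Finset ℕ
  | 0 => {0}
  | N + 1 => (Finset.range (S.r N) ×ˢ E S N).image
      (fun p => (∑ i ∈ Finset.range p.1, (S.h N + S.s N i)) + p.2)

lemma w_pos (S : RankOne) (n : ℕ) : 0 < S.w n := by
  induction n with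
  | zero => rw [S.w0]; norm_num
  | succ n ih =>
    rw [S.wrec]
    have := S.hr n
    have : (0 : ℝ) < S.r n := by exact_mod_cast (by omega : 0 < S.r n)
    positivity

lemma E_bound (S : RankOne) (hexp : S.ExpGrowing) (N : ℕ) : ∀ d ∈ S.E N, 2 * d < S.h N := by
  induction N with
  | zero => intro d hd; simp [E] at hd; simp [hd, S.h0]
  | succ N ih =>
    intro d hd
    simp only [E, Finset.mem_image, Finset.mem_product, Finset.mem_range, Prod.exists] at hd
    obtain ⟨k, d', ⟨hk, hd'⟩, rfl⟩ := hd
    have h1 := ih d' hd'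
    have h2 := hexp N
    have h3 := S.hrec N
    obtain ⟨q, hq⟩ : ∃ q, S.r N = q + 1 := ⟨S.r N - 1, by omega⟩
    rw [hq, Finset.sum_range_succ] at h3
    rw [hq, Nat.add_sub_cancel] at h2
    have h4 : ∑ i ∈ Finset.range k, (S.h N + S.s N i) ≤ ∑ i ∈ Finset.range q, (S.h N + S.s N i) :=
      Finset.sum_le_sum_of_subset (Finset.range_subset_range.2 (by omega))
    omega

lemma E_subset (S : RankOne) (hexp : S.ExpGrowing) (N : ℕ) :
    ∀ d ∈ S.E N, S.lvl N d ⊆ S.lvl 0 0 := by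
  induction N with
  | zero => intro d hd; simp [E] at hd; simp [hd]
  | succ N ih =>
    intro d hd
    simp only [E, Finset.mem_image, Finset.mem_product, Finset.mem_range, Prod.exists] at hd
    obtain ⟨k, d', ⟨hk, hd'⟩, rfl⟩ := hd
    refine subset_trans ?_ (ih d' hd')
    have h1 := S.E_bound hexp N d' hd'
    unfold lvl
    rw [S.stack N d' (by omega) k hk]
    have hw := S.w_pos (N+1)
    have hr : (0 : ℝ) < S.r N := by exact_mod_cast (by omega : 0 < S.r N)
    have hwr : S.w N = S.r N * S.w (N+1) := by rw [S.wrec]; field_simp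
    have hk' : (k : ℝ) + 1 ≤ S.r N := by exact_mod_cast hk
    apply Ioo_subset_Ioo
    · have : (0:ℝ) ≤ k * S.w (N+1) := by positivity
      linarith
    · rw [hwr]; nlinarith

lemma E_null (S : RankOne) (hexp : S.ExpGrowing) (N : ℕ) :
    (S.lvl 0 0 \ ⋃ d ∈ S.E N, S.lvl N d).Countable := by
  induction N with
  | zero => simp [E]
  | succ N ih =>
    have hc : (⋃ d ∈ S.E N, ⋃ k ∈ Finset.range (S.r N),
        ({S.pos N d + (k : ℝ) * S.w (N+1)} : Set ℝ)).Countable :=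
      Set.Countable.biUnion (Finset.countable_toSet _) fun d _ =>
        Set.Countable.biUnion (Finset.countable_toSet _) fun k _ => Set.countable_singleton _
    refine (ih.union hc).mono ?_
    rintro x ⟨hx, hx'⟩
    by_cases hxN : x ∈ ⋃ d ∈ S.E N, S.lvl N d
    · right
      simp only [mem_iUnion, exists_prop] at hxN
      obtain ⟨d, hd, hxd⟩ := hxN
      have h1 := S.E_bound hexp N d hd
      have hw := S.w_pos (N+1)
      have hr2 := S.hr N
      have hr : (0 : ℝ) < S.r N := by exact_mod_cast (by omega : 0 < S.r N)
      have hwr : S.w N = S.r N * S.w (N+1) := by rw [S.wrec]; field_simp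
      unfold lvl at hxd
      have hq0 : 0 ≤ (x - S.pos N d) / S.w (N+1) := by
        apply div_nonneg _ hw.le; linarith [hxd.1]
      set k := ⌊(x - S.pos N d) / S.w (N+1)⌋₊ with hk
      have hk1 : (k : ℝ) * S.w (N+1) ≤ x - S.pos N d := by
        rw [← le_div_iff₀ hw]; exact Nat.floor_le hq0
      have hk2 : x - S.pos N d < ((k : ℝ) + 1) * S.w (N+1) := by
        rw [← div_lt_iff₀ hw]; exact Nat.lt_floor_add_one _
      have hkr : k < S.r N := by
        have : (k : ℝ) * S.w (N+1) < S.r N * S.w (N+1) := by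
          have := hxd.2; rw [hwr] at this; linarith
        exact_mod_cast lt_of_mul_lt_mul_right this hw.le
      simp only [mem_iUnion, exists_prop, mem_singleton_iff, Finset.mem_range]
      refine ⟨d, hd, k, hkr, ?_⟩
      by_contra hne
      apply hx'
      simp only [mem_iUnion, exists_prop]
      refine ⟨_, Finset.mem_image.2 ⟨(k, d),
        Finset.mem_product.2 ⟨Finset.mem_range.2 hkr, hd⟩, rfl⟩, ?_⟩
      simp only [lvl]
      rw [S.stack N d (by omega) k hkr]
      refine ⟨lt_of_le_of_ne (by linarith) (Ne.symm hne), by linarith⟩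
    · left; exact ⟨hx, hxN⟩

lemma lvl_disjoint (S : RankOne) (hexp : S.ExpGrowing) (N j : ℕ) (hj : j < S.h N)
    (hjE : j ∉ S.E N) : Disjoint (S.lvl N j) (S.lvl 0 0) := by
  rw [Set.disjoint_iff_inter_eq_empty]
  have hopen : IsOpen (S.lvl N j ∩ S.lvl 0 0) := isOpen_Ioo.inter isOpen_Ioo
  have hc : (S.lvl N j ∩ S.lvl 0 0).Countable := by
    refine (S.E_null hexp N).mono ?_
    rintro x ⟨hx1, hx2⟩
    refine ⟨hx2, ?_⟩
    simp only [mem_iUnion, exists_prop, not_exists, not_and]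
    intro d hd hxd
    have hb := S.E_bound hexp N d hd
    exact Set.disjoint_left.1 (S.disj N j hj d (by omega) (by rintro rfl; exact hjE hd)) hx1 hxd
  exact (hopen.measure_eq_zero_iff (volume : Measure ℝ)).1 (hc.measure_zero _)

lemma vol_union (S : RankOne) (hexp : S.ExpGrowing) (N : ℕ) (G : Finset ℕ) (hG : G ⊆ S.E N) :
    volume (⋃ d ∈ G, S.lvl N d) = G.card * ENNReal.ofReal (S.w N) := by
  rw [measure_biUnion_finset]
  · simp [lvl]
  · intro i hi j hj hij
    have h1 := S.E_bound hexp N i (hG hi)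
    have h2 := S.E_bound hexp N j (hG hj)
    exact S.disj N i (by omega) j (by omega) hij
  · intro b _; exact measurableSet_Ioo

lemma card_E (S : RankOne) (hexp : S.ExpGrowing) (N : ℕ) : ((S.E N).card : ℝ) * S.w N = 1 := by
  have h1 := S.vol_union hexp N (S.E N) subset_rfl
  have h2 : volume (⋃ d ∈ S.E N, S.lvl N d) = volume (S.lvl 0 0) := by
    apply measure_eq_measure_of_null_diff
    · exact iUnion₂_subset (S.E_subset hexp N)
    · exact (S.E_null hexp N).measure_zero _
  rw [h2] at h1
  simp only [lvl, S.pos0, S.w0, Real.volume_Ioo] at h1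
  have := congrArg ENNReal.toReal h1
  simp [ENNReal.toReal_mul, (S.w_pos N).le] at this
  linarith

lemma lvl0_sub (S : RankOne) : S.lvl 0 0 ⊆ S.X := by
  rw [S.hX]
  intro x hx
  simp only [mem_iUnion]
  exact ⟨0, 0, by rw [S.h0]; norm_num, hx⟩

lemma X_meas (S : RankOne) : MeasurableSet S.X := by
  rw [S.hX]
  exact MeasurableSet.iUnion fun n => MeasurableSet.iUnion fun j => MeasurableSet.iUnion fun _ =>
    measurableSet_Ioo

lemma mu_eq (S : RankOne) (A : Set ℝ) (hA : A ⊆ S.lvl 0 0) : S.μ A = volume A := by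
  unfold μ
  rw [Measure.restrict_apply' S.X_meas, inter_eq_left.2 (hA.trans S.lvl0_sub)]

lemma mu_I (S : RankOne) : S.μ (S.lvl 0 0) = 1 := by
  rw [S.mu_eq _ subset_rfl]; simp [lvl, S.w0]

lemma iter_lvl (S : RankOne) (N j i : ℕ) (hj : j + i < S.h N) (x : ℝ) (hx : x ∈ S.lvl N j) :
    (⇑S.T)^[i] x = x + (S.pos N (j + i) - S.pos N j) ∧ (⇑S.T)^[i] x ∈ S.lvl N (j + i) := by
  induction i with
  | zero => simpa using hx
  | succ i ih =>
    obtain ⟨h1, h2⟩ := ih (by omega)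
    have h3 := S.Tmap N (j + i) (by omega) _ h2
    rw [Function.iterate_succ_apply', h3]
    constructor
    · rw [h1, ← add_assoc]; ring
    · unfold lvl at h2 ⊢
      rw [← add_assoc]
      constructor <;> linarith [h2.1, h2.2]

lemma birkhoff_le (S : RankOne) (hexp : S.ExpGrowing) (N n : ℕ) (hn : 2 * n ≤ S.h N) (x : ℝ)
    (hx : ∀ k : ℕ, (⇑S.T)^[k] x ∉ S.lvl 0 0 \ ⋃ d ∈ S.E N, S.lvl N d) :
    S.birkhoff (S.lvl 0 0) n x ≤ (S.E N).card := by
  classical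
  unfold birkhoff
  have h1 : ∑ k ∈ Finset.range n, Set.indicator (S.lvl 0 0) (fun _ => (1 : ℝ)) ((⇑S.T)^[k] x)
      = (((Finset.range n).filter fun k => (⇑S.T)^[k] x ∈ S.lvl 0 0).card : ℝ) := by
    rw [Finset.card_filter]
    push_cast
    refine Finset.sum_congr rfl fun k _ => ?_
    simp [Set.indicator_apply]
  rw [h1]
  norm_cast
  set P := (Finset.range n).filter fun k => (⇑S.T)^[k] x ∈ S.lvl 0 0 with hP
  rcases P.eq_empty_or_nonempty with he | hne
  · simp [he]
  · set k0 := P.min' hne with hk0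
    have hk0P : k0 ∈ P := P.min'_mem hne
    have hk0I := (Finset.mem_filter.1 hk0P).2
    have h2 : (⇑S.T)^[k0] x ∈ ⋃ d ∈ S.E N, S.lvl N d := by
      by_contra hcon; exact hx k0 ⟨hk0I, hcon⟩
    simp only [mem_iUnion, exists_prop] at h2
    obtain ⟨d, hd, hxd⟩ := h2
    have hb := S.E_bound hexp N d hd
    refine Finset.card_le_card_of_injOn (fun k => d + (k - k0)) ?_ ?_
    · intro k hk
      have hk' : k ∈ P := hk
      have hmin : k0 ≤ k := P.min'_le k hk'
      have hkn := Finset.mem_range.1 (Finset.mem_filter.1 hk').1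
      have hkI := (Finset.mem_filter.1 hk').2
      by_contra hcon
      have h3 := (S.iter_lvl N d (k - k0) (by omega) _ hxd).2
      rw [← Function.iterate_add_apply, Nat.sub_add_cancel hmin] at h3
      exact Set.disjoint_left.1 (S.lvl_disjoint hexp N (d + (k - k0)) (by omega) hcon) h3 hkI
    · intro k hk k' hk' heq
      have h3 : k0 ≤ k := P.min'_le k hk
      have h4 : k0 ≤ k' := P.min'_le k' hk'
      simp only at heq
      omega

lemma a_ge (S : RankOne) (hexp : S.ExpGrowing) (m n : ℕ) (hn : S.h m < 2 * n) :
    ((S.E m).card : ℝ) / 2 ≤ S.a (S.lvl 0 0) n := by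
  classical
  set G : ℕ → Finset ℕ := fun k => (S.E m).filter fun d => k ≤ d ∧ d - k ∈ S.E m with hG
  have hu : ∀ k, (G k).card * S.w m ≤ S.u (S.lvl 0 0) k := by
    intro k
    unfold u
    rw [S.mu_I]
    have hsub : (⋃ d ∈ G k, S.lvl m d) ⊆ S.lvl 0 0 ∩ (⇑S.T)^[k] '' S.lvl 0 0 := by
      refine iUnion₂_subset fun d hd => ?_
      obtain ⟨hd1, hkd, hd2⟩ := Finset.mem_filter.1 hd
      refine subset_inter (S.E_subset hexp m d hd1) ?_
      intro y hy
      have hb := S.E_bound hexp m d hd1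
      have hz : y - (S.pos m d - S.pos m (d - k)) ∈ S.lvl m (d - k) := by
        unfold lvl at hy ⊢
        constructor <;> linarith [hy.1, hy.2]
      refine ⟨_, S.E_subset hexp m _ hd2 hz, ?_⟩
      rw [(S.iter_lvl m (d - k) k (by omega) _ hz).1, Nat.sub_add_cancel hkd]
      ring
    have h1 : volume (⋃ d ∈ G k, S.lvl m d) ≤ S.μ (S.lvl 0 0 ∩ (⇑S.T)^[k] '' S.lvl 0 0) := by
      rw [S.mu_eq _ inter_subset_left]
      exact measure_mono hsub
    rw [S.vol_union hexp m _ (Finset.filter_subset _ _)] at h1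
    have hfin : S.μ (S.lvl 0 0 ∩ (⇑S.T)^[k] '' S.lvl 0 0) ≠ ⊤ := by
      refine ne_top_of_le_ne_top ?_ (measure_mono inter_subset_left)
      rw [S.mu_I]; simp
    have h2 := ENNReal.toReal_mono hfin h1
    simpa [ENNReal.toReal_mul, (S.w_pos m).le] using h2
  set P := (S.E m ×ˢ S.E m).filter fun p => p.1 ≤ p.2 with hP
  have hcard : (P.card : ℕ) ≤ ∑ k ∈ Finset.range n, (G k).card := by
    rw [Finset.card_eq_sum_card_fiberwise (f := fun p => p.2 - p.1) (t := Finset.range n)]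
    · refine Finset.sum_le_sum fun k _ => ?_
      refine Finset.card_le_card_of_injOn (fun p => p.2) ?_ ?_
      · rintro ⟨p, q⟩ hp
        simp only [hP, Finset.coe_filter, Finset.mem_filter, Finset.mem_product, mem_setOf_eq] at hp
        obtain ⟨⟨⟨h1, h2⟩, h3⟩, h4⟩ := hp
        simp only [hG, Finset.coe_filter, mem_setOf_eq]
        refine ⟨h2, by omega, ?_⟩
        have : q - k = p := by omega
        rwa [this]
      · rintro ⟨p, q⟩ hp ⟨p', q'⟩ hp' heq
        simp only [hP, Finset.coe_filter, Finset.mem_filter, Finset.mem_product, mem_setOf_eq]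
          at hp hp'
        simp only at heq
        simp only [Prod.mk.injEq]
        omega
    · rintro ⟨p, q⟩ hp
      simp only [hP, Finset.coe_filter, Finset.mem_product, mem_setOf_eq] at hp
      have hb := S.E_bound hexp m q hp.1.2
      simp only [Finset.coe_range, mem_Iio]
      omega
  have hsym : (S.E m).card * (S.E m).card ≤ 2 * P.card := by
    have h1 : (S.E m ×ˢ S.E m) ⊆ P ∪ P.image Prod.swap := by
      rintro ⟨p, q⟩ hp
      rw [Finset.mem_product] at hp
      rcases le_total p q with h | h
      · exact Finset.mem_union_left _ (Finset.mem_filter.2 ⟨Finset.mem_product.2 hp, h⟩)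
      · exact Finset.mem_union_right _ (Finset.mem_image.2 ⟨(q, p),
          Finset.mem_filter.2 ⟨Finset.mem_product.2 ⟨hp.2, hp.1⟩, h⟩, rfl⟩)
    have h2 := Finset.card_le_card h1
    rw [Finset.card_product] at h2
    have h3 := Finset.card_union_le P (P.image Prod.swap)
    have h4 : (P.image Prod.swap).card ≤ P.card := Finset.card_image_le
    omega
  have hw := S.w_pos m
  have hE := S.card_E hexp m
  have h5 : ((∑ k ∈ Finset.range n, (G k).card : ℕ) : ℝ) * S.w m ≤ S.a (S.lvl 0 0) n := by
    unfold a
    push_cast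
    rw [Finset.sum_mul]
    exact Finset.sum_le_sum fun k _ => hu k
  have h6 : ((S.E m).card : ℝ) * (S.E m).card ≤
      2 * ((∑ k ∈ Finset.range n, (G k).card : ℕ) : ℝ) := by
    exact_mod_cast hsym.trans (by omega)
  have h7 := mul_le_mul_of_nonneg_right h6 hw.le
  rw [mul_assoc, hE] at h7
  linarith

lemma h_ge (S : RankOne) (N : ℕ) : 2 ^ N ≤ S.h N := by
  induction N with
  | zero => simp [S.h0]
  | succ N ih =>
    rw [S.hrec, Finset.sum_add_distrib, Finset.sum_const, Finset.card_range, smul_eq_mul, pow_succ]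
    have := Nat.mul_le_mul (S.hr N) ih
    omega

end RankOne

/-- An exponentially growing rank-one transformation with a bounded number of
cuts is boundedly rationally ergodic on the unit interval `I`: there is a constant `c` such
that for every `n ≥ 1` the essential supremum of `(1/a_n(I)) S_n(1_I)` is at most `c`. -/
theorem statement3 (S : RankOne) (hexp : S.ExpGrowing) (hbdd : S.BoundedCuts) :
    ∃ c : ℝ, ∀ n : ℕ, 1 ≤ n →
      ∀ᵐ x ∂S.μ, (S.a (S.lvl 0 0) n)⁻¹ * S.birkhoff (S.lvl 0 0) n x ≤ c := by
  obtain ⟨C, hC⟩ := hbdd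
  refine ⟨2 * C, fun n hn => ?_⟩
  have hex : ∃ N, 2 * n ≤ S.h N :=
    ⟨2 * n, (Nat.lt_two_pow_self (n := 2 * n)).le.trans (S.h_ge _)⟩
  obtain ⟨m, hm1, hm2⟩ : ∃ m, S.h m < 2 * n ∧ 2 * n ≤ S.h (m + 1) := by
    classical
    have h1 := Nat.find_spec hex
    have h0 : Nat.find hex ≠ 0 := by
      intro h; rw [h, S.h0] at h1; omega
    obtain ⟨m, hm⟩ := Nat.exists_eq_succ_of_ne_zero h0
    refine ⟨m, ?_, ?_⟩
    · have := Nat.find_min hex (m := m) (by omega)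
      omega
    · rw [hm] at h1; exact h1
  have hgood : ∀ᵐ x ∂S.μ, x ∉ S.lvl 0 0 \ ⋃ d ∈ S.E (m+1), S.lvl (m+1) d := by
    rw [ae_iff]
    simp only [not_not, setOf_mem_eq]
    rw [S.mu_eq _ diff_subset]
    exact (S.E_null hexp (m+1)).measure_zero _
  have hall : ∀ᵐ x ∂S.μ, ∀ k : ℕ,
      (⇑S.T)^[k] x ∉ S.lvl 0 0 \ ⋃ d ∈ S.E (m+1), S.lvl (m+1) d := by
    rw [ae_all_iff]
    intro k
    exact (S.Tpres.iterate k).quasiMeasurePreserving.ae hgood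
  filter_upwards [hall] with x hx
  have h1 := S.birkhoff_le hexp (m+1) n hm2 x hx
  have h2 := S.a_ge hexp m n hm1
  have hEm := S.card_E hexp m
  have hEm1 := S.card_E hexp (m+1)
  have hw := S.w_pos m
  have hr2 := S.hr m
  have hr : (0 : ℝ) < S.r m := by exact_mod_cast (by omega : 0 < S.r m)
  have hcm : (0 : ℝ) < (S.E m).card := by
    by_contra hcon
    nlinarith
  have hEE : ((S.E (m+1)).card : ℝ) = S.r m * (S.E m).card := by
    rw [S.wrec] at hEm1
    have h3 : ((S.E (m+1)).card : ℝ) * S.w m = S.r m := by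
      field_simp at hEm1; linarith
    have h4 : ((S.E (m+1)).card : ℝ) * S.w m = (S.r m * (S.E m).card) * S.w m := by
      rw [h3, mul_assoc, hEm, mul_one]
    exact mul_right_cancel₀ hw.ne' h4
  have hrC : (S.r m : ℝ) ≤ C := by exact_mod_cast hC m
  have ha : 0 < S.a (S.lvl 0 0) n := by linarith
  rw [inv_mul_le_iff₀ ha]
  calc S.birkhoff (S.lvl 0 0) n x ≤ S.r m * (S.E m).card := by rw [← hEE]; exact h1
    _ ≤ C * (S.E m).card := by gcongr
    _ ≤ C * (2 * S.a (S.lvl 0 0) n) := by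
        have : (0:ℝ) ≤ C := hr.le.trans hrC
        gcongr; linarith
    _ = _ := by ring
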